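/- For any cube Q₀ ⊆ ℝ^n and β ∈ (0,n], there is a constant C_β > 1 such that for every set E ⊆ ℝ^n, (1/C_β) H^{β,Q₀}_∞(E) ≤ H^β_∞(E) ≤ C_β H^{β,Q₀}_∞(E). Consequently, the Choquet integral with respect to H^β_∞ is countably quasi-subadditive: ∫ ∑_j f_j dH^β_∞ ≤ C_β² ∑_j ∫ f_j dH^β_∞ for nonnegative f_j. -/

import Mathlib

open scoped ENNReal
open Metric Set MeasureTheory

noncomputable section

/-- `ℝⁿ` as Euclidean space. -/
abbrev Rn (n : ℕ) := EuclideanSpace ℝ (Fin n)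

/-- The Choquet integral of a nonnegative function `g` with respect to a
(monotone) set function `C`: `∫ g dC := ∫_0^∞ C({g > t}) dt`. -/
noncomputable def choquet {X : Type*} (C : Set X → ℝ≥0∞) (g : X → ℝ≥0∞) : ℝ≥0∞ :=
  ∫⁻ t in Ioi (0 : ℝ), C {x | ENNReal.ofReal t < g x}

/-- The Choquet integral of `g` restricted to a set `A`. -/
noncomputable def choquetOn {X : Type*} (C : Set X → ℝ≥0∞) (A : Set X) (g : X → ℝ≥0∞) : ℝ≥0∞ :=
  ∫⁻ t in Ioi (0 : ℝ), C {x | x ∈ A ∧ ENNReal.ofReal t < g x}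

/-- The `L^∞(C)` norm: `inf {λ > 0 : C({|f| > λ}) = 0}` (formulated in `ℝ≥0∞`). -/
noncomputable def choquetEssSup {X : Type*} (C : Set X → ℝ≥0∞) (f : X → ℝ) : ℝ≥0∞ :=
  sInf {l : ℝ≥0∞ | C {x | l < ENNReal.ofReal |f x|} = 0}

/-- `C`-quasicontinuity of a function `f`. -/
def QuasiCont {X : Type*} [TopologicalSpace X] (C : Set X → ℝ≥0∞) (f : X → ℝ) : Prop :=
  ∀ ε : ℝ≥0∞, 0 < ε → ∃ U : Set X, IsOpen U ∧ C U < ε ∧ ContinuousOn f Uᶜ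

/-- Membership in the capacitary space `L^p(C)`: `C`-quasicontinuous with
finite `p`-th power Choquet integral. -/
def MemChoquetLp {X : Type*} [TopologicalSpace X] (C : Set X → ℝ≥0∞) (p : ℝ) (f : X → ℝ) : Prop :=
  QuasiCont C f ∧ choquet C (fun x => ENNReal.ofReal |f x| ^ p) < ∞

/-- The normalization constant `ω_β = π^{β/2}/Γ(β/2+1)`. -/
noncomputable def omegaC (β : ℝ) : ℝ≥0∞ :=
  ENNReal.ofReal (Real.pi ^ (β / 2) / Real.Gamma (β / 2 + 1))

/-- The `β`-dimensional Hausdorff content `H^β_∞`, defined via countable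
coverings by balls: `inf {∑ ω_β r_i^β : E ⊆ ⋃ B(x_i, r_i)}`. -/
noncomputable def hContent (n : ℕ) (β : ℝ) (E : Set (Rn n)) : ℝ≥0∞ :=
  ⨅ (c : ℕ → Rn n × ℝ) (_ : E ⊆ ⋃ i, ball (c i).1 (c i).2),
    ∑' i, omegaC β * ENNReal.ofReal ((c i).2 ^ β)

/-- The centered Hausdorff content maximal function
`M_{H^β_∞} g(x) := sup_{r>0} (1/(ω_β r^β)) ∫_{B(x,r)} g dH^β_∞`. -/
noncomputable def maximalH (n : ℕ) (β : ℝ) (g : Rn n → ℝ≥0∞) (x : Rn n) : ℝ≥0∞ :=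
  ⨆ (r : ℝ) (_ : 0 < r),
    (omegaC β * ENNReal.ofReal (r ^ β))⁻¹ * choquetOn (hContent n β) (ball x r) g

/-- A dyadic cube of generation `k` (side length `2^{-k} l`) at position `m`
in the dyadic lattice generated by the cube with corner `a` and side `l`. -/
def dyadicCube (n : ℕ) (a : Rn n) (l : ℝ) (k : ℤ) (m : Fin n → ℤ) : Set (Rn n) :=
  {x | ∀ i, a i + m i * ((2 : ℝ) ^ (-k) * l) ≤ x i ∧
        x i < a i + (m i + 1) * ((2 : ℝ) ^ (-k) * l)}

/-- The dyadic Hausdorff content `H^{β,Q₀}_∞` associated with the dyadic lattice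
generated by the cube `Q₀` with corner `a` and side length `l`:
`inf {∑ ℓ(Q_i)^β : E ⊆ ⋃ Q_i, Q_i ∈ D(Q₀)}`. -/
noncomputable def dContent (n : ℕ) (β : ℝ) (a : Rn n) (l : ℝ) (E : Set (Rn n)) : ℝ≥0∞ :=
  ⨅ (c : ℕ → ℤ × (Fin n → ℤ)) (_ : E ⊆ ⋃ i, dyadicCube n a l (c i).1 (c i).2),
    ∑' i, ENNReal.ofReal (((2 : ℝ) ^ (-(c i).1) * l) ^ β)

/-- The dyadic Hausdorff content maximal function
`M^{β,Q₀}_∞ g(x) := sup {(1/ℓ(Q)^β) ∫_Q g dH^{β,Q₀}_∞ : x ∈ Q ∈ D(Q₀)}`. -/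
noncomputable def dyadicMaximal (n : ℕ) (β : ℝ) (a : Rn n) (l : ℝ) (g : Rn n → ℝ≥0∞)
    (x : Rn n) : ℝ≥0∞ :=
  ⨆ (k : ℤ) (m : Fin n → ℤ) (_ : x ∈ dyadicCube n a l k m),
    (ENNReal.ofReal (((2 : ℝ) ^ (-k) * l) ^ β))⁻¹ *
      choquetOn (dContent n β a l) (dyadicCube n a l k m) g

/-!
The Choquet integral with respect to the dyadic content is *equal* to the least total cost
`∑ w_Q ℓ(Q)^β` of weights on the dyadic cubes with `f ≤ ∑ w_Q 1_Q`, and such fractional covers of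
countably many functions can be added. Slicing `f` at the levels `ρ^k` and covering every
superlevel set gives a fractional cover of cost at most `ρ ∫ f`, and `ρ → 1`. Conversely, follow
the decreasing chain of cubes containing a point: the superlevel set of `∑ w_Q 1_Q` at height `t`
is covered by the cubes whose weight, added to that of their ancestors, first makes the sum
exceed `t`, and a given `Q` is selected only for a set of heights `t` of measure at most `w_Q`.

A ball of radius `r` is covered by `3^n` dyadic cubes of side between `r` and `2r`, and a cube of
side `s` lies in a ball of radius `(n + 1)s`, so the two contents are comparable with a constant
that depends on `n` and `β` only. Comparing twice turns the exact subadditivity of the dyadic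
Choquet integral into quasi-subadditivity with the square of this constant.
-/

section GeometricSums

variable {ρ : ℝ}

lemma iUnion_Ioc_zpow_eq_Ioi (hρ : 1 < ρ) : ⋃ k : ℤ, Ioc (ρ ^ k) (ρ ^ (k + 1)) = Ioi 0 := by
  have hρ0 : 0 < ρ := one_pos.trans hρ
  refine subset_antisymm (iUnion_subset fun k t ht => (zpow_pos hρ0 k).trans ht.1) fun t ht => ?_
  exact mem_iUnion.2 (exists_mem_Ioc_zpow ht hρ)

lemma lintegral_Ioi_eq_tsum_zpow (hρ : 1 < ρ) (φ : ℝ → ℝ≥0∞) :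
    ∫⁻ t in Ioi 0, φ t = ∑' k : ℤ, ∫⁻ t in Ioc (ρ ^ k) (ρ ^ (k + 1)), φ t := by
  have hdisj : Pairwise (Function.onFun Disjoint fun k : ℤ => Ioc (ρ ^ k) (ρ ^ (k + 1))) :=
    (zpow_right_mono₀ hρ.le).pairwise_disjoint_on_Ioc_succ
  rw [← iUnion_Ioc_zpow_eq_Ioi hρ, lintegral_iUnion (fun _ => measurableSet_Ioc) hdisj]

lemma lintegral_Ioi_le_tsum_zpow (hρ : 1 < ρ) {φ : ℝ → ℝ≥0∞} (hφ : Antitone φ) :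
    ∫⁻ t in Ioi 0, φ t ≤ ∑' k : ℤ, ENNReal.ofReal (ρ ^ (k + 1) - ρ ^ k) * φ (ρ ^ k) := by
  rw [lintegral_Ioi_eq_tsum_zpow hρ]
  refine ENNReal.tsum_le_tsum fun k => ?_
  calc ∫⁻ t in Ioc (ρ ^ k) (ρ ^ (k + 1)), φ t
      ≤ ∫⁻ _ in Ioc (ρ ^ k) (ρ ^ (k + 1)), φ (ρ ^ k) :=
        setLIntegral_mono' measurableSet_Ioc fun t ht => hφ ht.1.le
    _ = ENNReal.ofReal (ρ ^ (k + 1) - ρ ^ k) * φ (ρ ^ k) := by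
        rw [setLIntegral_const, Real.volume_Ioc, mul_comm]

lemma tsum_zpow_le_lintegral_Ioi (hρ : 1 < ρ) {φ : ℝ → ℝ≥0∞} (hφ : Antitone φ) :
    ∑' k : ℤ, ENNReal.ofReal (ρ ^ (k + 1) - ρ ^ k) * φ (ρ ^ (k + 1)) ≤ ∫⁻ t in Ioi 0, φ t := by
  rw [lintegral_Ioi_eq_tsum_zpow hρ]
  refine ENNReal.tsum_le_tsum fun k => ?_
  calc ENNReal.ofReal (ρ ^ (k + 1) - ρ ^ k) * φ (ρ ^ (k + 1))
      = ∫⁻ _ in Ioc (ρ ^ k) (ρ ^ (k + 1)), φ (ρ ^ (k + 1)) := by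
        rw [setLIntegral_const, Real.volume_Ioc, mul_comm]
    _ ≤ ∫⁻ t in Ioc (ρ ^ k) (ρ ^ (k + 1)), φ t :=
        setLIntegral_mono' measurableSet_Ioc fun t ht => hφ ht.2

lemma tsum_zpow_le_mul_lintegral_Ioi (hρ : 1 < ρ) {φ : ℝ → ℝ≥0∞} (hφ : Antitone φ) :
    ∑' k : ℤ, ENNReal.ofReal (ρ ^ (k + 1) - ρ ^ k) * φ (ρ ^ k) ≤
      ENNReal.ofReal ρ * ∫⁻ t in Ioi 0, φ t := by
  have hρ0 : 0 < ρ := one_pos.trans hρ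
  have hlength (k : ℤ) : ENNReal.ofReal (ρ ^ (k + 1 + 1) - ρ ^ (k + 1)) =
      ENNReal.ofReal ρ * ENNReal.ofReal (ρ ^ (k + 1) - ρ ^ k) := by
    rw [← ENNReal.ofReal_mul hρ0.le, zpow_add_one₀ hρ0.ne' (k + 1), zpow_add_one₀ hρ0.ne' k]
    ring_nf
  calc ∑' k : ℤ, ENNReal.ofReal (ρ ^ (k + 1) - ρ ^ k) * φ (ρ ^ k)
      = ∑' k : ℤ, ENNReal.ofReal (ρ ^ (k + 1 + 1) - ρ ^ (k + 1)) * φ (ρ ^ (k + 1)) :=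
        ((Equiv.addRight (1 : ℤ)).tsum_eq _).symm
    _ = ENNReal.ofReal ρ *
          ∑' k : ℤ, ENNReal.ofReal (ρ ^ (k + 1) - ρ ^ k) * φ (ρ ^ (k + 1)) := by
        simp only [hlength, mul_assoc, ENNReal.tsum_mul_left]
    _ ≤ ENNReal.ofReal ρ * ∫⁻ t in Ioi 0, φ t := by
        gcongr
        exact tsum_zpow_le_lintegral_Ioi hρ hφ

end GeometricSums

section Levels

lemma volume_ofReal_preimage_Iio (y : ℝ≥0∞) :
    volume (Ioi 0 ∩ ENNReal.ofReal ⁻¹' Iio y) = y := by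
  rcases eq_or_ne y ∞ with rfl | hy
  · have htop : ENNReal.ofReal ⁻¹' Iio ∞ = univ := eq_univ_of_forall fun _ => ENNReal.ofReal_lt_top
    rw [htop, inter_univ, Real.volume_Ioi]
  · have hIoo : Ioi 0 ∩ ENNReal.ofReal ⁻¹' Iio y = Ioo 0 y.toReal :=
      Set.ext fun t => and_congr_right fun ht =>
        ENNReal.ofReal_lt_iff_lt_toReal (mem_Ioi.1 ht).le hy
    rw [hIoo, Real.volume_Ioo, sub_zero, ENNReal.ofReal_toReal hy]

lemma measurableSet_ofReal_preimage_Ico (A B : ℝ≥0∞) :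
    MeasurableSet (Ioi 0 ∩ ENNReal.ofReal ⁻¹' Ico A B) :=
  measurableSet_Ioi.inter (ENNReal.measurable_ofReal measurableSet_Ico)

lemma volume_ofReal_preimage_Ico (A B : ℝ≥0∞) :
    volume (Ioi 0 ∩ ENNReal.ofReal ⁻¹' Ico A B) = B - A := by
  rcases le_total B A with hBA | hAB
  · simp [hBA, tsub_eq_zero_of_le hBA]
  rcases eq_or_ne A ∞ with rfl | hA
  · simp
  rw [← Iio_sdiff_Iio, preimage_sdiff, inter_sdiff_distrib_left, measure_sdiff,
    volume_ofReal_preimage_Iio, volume_ofReal_preimage_Iio]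
  · gcongr
  · exact (measurableSet_Ioi.inter
      (ENNReal.measurable_ofReal measurableSet_Iio)).nullMeasurableSet
  · rwa [volume_ofReal_preimage_Iio]

end Levels

section Choquet

variable {X : Type*} {C D : Set X → ℝ≥0∞}

lemma antitone_superlevel (f : X → ℝ≥0∞) : Antitone fun t : ℝ => {x | ENNReal.ofReal t < f x} :=
  fun _ _ hst _ hx => (ENNReal.ofReal_le_ofReal hst).trans_lt hx

lemma le_tsum_zpow_superlevel {ρ : ℝ} (hρ : 1 < ρ) (f : X → ℝ≥0∞) (x : X) :
    f x ≤ ∑' k : ℤ, {y | ENNReal.ofReal (ρ ^ k) < f y}.indicator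
      (fun _ => ENNReal.ofReal (ρ ^ (k + 1) - ρ ^ k)) x := by
  let φ (t : ℝ) : ℝ≥0∞ := {y | ENNReal.ofReal t < f y}.indicator 1 x
  have hφ : Antitone φ := fun _ _ hst =>
    indicator_le_indicator_of_subset (antitone_superlevel f hst) (fun _ => zero_le) x
  calc f x = ∫⁻ t in Ioi 0, φ t := by
        have hφ_eq : φ = (ENNReal.ofReal ⁻¹' Iio (f x)).indicator 1 := rfl
        rw [hφ_eq, lintegral_indicator_one (ENNReal.measurable_ofReal measurableSet_Iio),
          Measure.restrict_apply' measurableSet_Ioi, inter_comm, volume_ofReal_preimage_Iio]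
    _ ≤ ∑' k : ℤ, ENNReal.ofReal (ρ ^ (k + 1) - ρ ^ k) * φ (ρ ^ k) :=
        lintegral_Ioi_le_tsum_zpow hρ hφ
    _ = _ := by simp [φ, indicator_apply]

lemma choquet_mono (hC : Monotone C) {f g : X → ℝ≥0∞} (hfg : f ≤ g) :
    choquet C f ≤ choquet C g :=
  lintegral_mono fun _ => hC fun x hx => lt_of_lt_of_le hx (hfg x)

lemma choquet_le_mul_choquet {K : ℝ≥0∞} (hK : K ≠ ∞) (h : ∀ E, C E ≤ K * D E) (g : X → ℝ≥0∞) :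
    choquet C g ≤ K * choquet D g := by
  rw [choquet, choquet, ← lintegral_const_mul' _ _ hK]
  exact lintegral_mono fun t => h _

lemma choquet_tsum_le_of_comparable {ι : Type*} {K : ℝ≥0∞} (hK : K ≠ ∞)
    (hCD : ∀ E, C E ≤ K * D E) (hDC : ∀ E, D E ≤ K * C E) {f : ι → X → ℝ≥0∞}
    (hD : choquet D (fun x => ∑' i, f i x) ≤ ∑' i, choquet D (f i)) :
    choquet C (fun x => ∑' i, f i x) ≤ K ^ 2 * ∑' i, choquet C (f i) :=
  calc choquet C (fun x => ∑' i, f i x)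
      ≤ K * choquet D (fun x => ∑' i, f i x) := choquet_le_mul_choquet hK hCD _
    _ ≤ K * ∑' i, choquet D (f i) := by gcongr
    _ ≤ K * ∑' i, K * choquet C (f i) := by
        gcongr with i
        exact choquet_le_mul_choquet hK hDC _
    _ = K ^ 2 * ∑' i, choquet C (f i) := by rw [ENNReal.tsum_mul_left, sq, mul_assoc]

end Choquet

section Covering

variable {X P : Type*} {Q : P → Set X} {c : P → ℝ≥0∞}

/-- The content generated by a family of sets `Q p` of cost `c p`: the infimal total cost of a
sequence of these sets covering `E`. Both Hausdorff contents above are of this form. -/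
def coveringContent (Q : P → Set X) (c : P → ℝ≥0∞) (E : Set X) : ℝ≥0∞ :=
  ⨅ (s : ℕ → P) (_ : E ⊆ ⋃ i, Q (s i)), ∑' i, c (s i)

lemma coveringContent_mono : Monotone (coveringContent Q c) := fun _ _ h =>
  iInf_mono fun _ => iInf_mono' fun hF => ⟨h.trans hF, le_rfl⟩

lemma coveringContent_le_tsum_of_infinite {σ : Type*} [Countable σ] [Infinite σ] (s : σ → P)
    {E : Set X} (hE : E ⊆ ⋃ i, Q (s i)) : coveringContent Q c E ≤ ∑' i, c (s i) := by
  obtain ⟨e⟩ := nonempty_equiv_of_countable (α := ℕ) (β := σ)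
  calc coveringContent Q c E ≤ ∑' i, c (s (e i)) :=
        iInf₂_le (fun i => s (e i)) (hE.trans (e.surjective.iUnion_comp fun i => Q (s i)).ge)
    _ = ∑' i, c (s i) := e.tsum_eq fun i => c (s i)

lemma coveringContent_le_tsum (hc : ∀ ε > 0, ∃ p, c p < ε) {σ : Type*} [Countable σ] (s : σ → P)
    {E : Set X} (hE : E ⊆ ⋃ i, Q (s i)) : coveringContent Q c E ≤ ∑' i, c (s i) := by
  refine ENNReal.le_of_forall_pos_le_add fun ε hε _ => ?_
  obtain ⟨δ, hδ, hδε⟩ := ENNReal.exists_pos_sum_of_countable' (ENNReal.coe_ne_zero.2 hε.ne') ℕ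
  choose q hq using fun i => hc (δ i) (hδ i)
  calc coveringContent Q c E
      ≤ ∑' i : σ ⊕ ℕ, c (Sum.elim s q i) :=
        coveringContent_le_tsum_of_infinite (Sum.elim s q)
          (hE.trans (iUnion_subset fun i => subset_iUnion_of_subset (Sum.inl i) subset_rfl))
    _ = ∑' i, c (s i) + ∑' i, c (q i) := Summable.tsum_sum ENNReal.summable ENNReal.summable
    _ ≤ ∑' i, c (s i) + ε := by
        gcongr
        exact (ENNReal.tsum_le_tsum fun i => (hq i).le).trans hδε.le

lemma coveringContent_le_of_subset (hc : ∀ ε > 0, ∃ p, c p < ε) {E : Set X} {p : P}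
    (hE : E ⊆ Q p) : coveringContent Q c E ≤ c p := by
  simpa using coveringContent_le_tsum hc (fun _ : Unit => p) (hE.trans (iUnion_const _).ge)

lemma coveringContent_empty (hc : ∀ ε > 0, ∃ p, c p < ε) : coveringContent Q c ∅ = 0 := by
  simpa using coveringContent_le_tsum hc (Q := Q) (Empty.elim) (empty_subset _)

lemma coveringContent_iUnion_le (E : ℕ → Set X) :
    coveringContent Q c (⋃ i, E i) ≤ ∑' i, coveringContent Q c (E i) := by
  refine ENNReal.le_of_forall_pos_le_add fun ε hε hlt => ?_
  obtain ⟨δ, hδ, hδε⟩ := ENNReal.exists_pos_sum_of_countable' (ENNReal.coe_ne_zero.2 hε.ne') ℕ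
  have hcover (i : ℕ) : ∃ s : ℕ → P, E i ⊆ ⋃ j, Q (s j) ∧
      ∑' j, c (s j) < coveringContent Q c (E i) + δ i := by
    simpa only [coveringContent, iInf_lt_iff, exists_prop] using
      ENNReal.lt_add_right (ENNReal.ne_top_of_tsum_ne_top hlt.ne i) (hδ i).ne'
  choose s hs hsum using hcover
  calc coveringContent Q c (⋃ i, E i)
      ≤ ∑' p : ℕ × ℕ, c (s p.1 p.2) := by
        refine coveringContent_le_tsum_of_infinite (fun p : ℕ × ℕ => s p.1 p.2) ?_
        rw [iUnion_prod']
        exact iUnion_mono hs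
    _ = ∑' i, ∑' j, c (s i j) := ENNReal.tsum_prod'
    _ ≤ ∑' i, (coveringContent Q c (E i) + δ i) := ENNReal.tsum_le_tsum fun i => (hsum i).le
    _ ≤ ∑' i, coveringContent Q c (E i) + ε := by
        rw [ENNReal.tsum_add]
        gcongr

lemma coveringContent_le_mul_coveringContent {P' : Type*} {Q' : P' → Set X} {c' : P' → ℝ≥0∞}
    {K : ℝ≥0∞} (hK₀ : K ≠ 0) (hK : K ≠ ∞) (h : ∀ p, coveringContent Q c (Q' p) ≤ K * c' p)
    (E : Set X) : coveringContent Q c E ≤ K * coveringContent Q' c' E := by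
  rw [coveringContent.eq_def Q' c' E, ENNReal.mul_iInf_of_ne hK₀ hK]
  refine le_iInf fun s => ?_
  rw [ENNReal.mul_iInf_of_ne hK₀ hK]
  refine le_iInf fun hE => ?_
  calc coveringContent Q c E
      ≤ coveringContent Q c (⋃ i, Q' (s i)) := coveringContent_mono hE
    _ ≤ ∑' i, coveringContent Q c (Q' (s i)) := coveringContent_iUnion_le _
    _ ≤ ∑' i, K * c' (s i) := ENNReal.tsum_le_tsum fun i => h (s i)
    _ = K * ∑' i, c' (s i) := ENNReal.tsum_mul_left

/-- The infimal total cost of a weighted sum of indicators of the sets `Q p` that dominates `f`,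
a fractional version of `coveringContent` for functions. -/
def fractionalCoverCost (Q : P → Set X) (c : P → ℝ≥0∞) (f : X → ℝ≥0∞) : ℝ≥0∞ :=
  ⨅ (w : P → ℝ≥0∞) (_ : ∀ x, f x ≤ ∑' p, (Q p).indicator (fun _ => w p) x), ∑' p, w p * c p

lemma fractionalCoverCost_mono : Monotone (fractionalCoverCost Q c) := fun _ _ hfg =>
  iInf_mono fun _ => iInf_mono' fun hw => ⟨fun x => (hfg x).trans (hw x), le_rfl⟩

lemma fractionalCoverCost_tsum_le {ι : Type*} [Countable ι] (f : ι → X → ℝ≥0∞) :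
    fractionalCoverCost Q c (fun x => ∑' i, f i x) ≤ ∑' i, fractionalCoverCost Q c (f i) := by
  refine ENNReal.le_of_forall_pos_le_add fun ε hε hlt => ?_
  obtain ⟨δ, hδ, hδε⟩ := ENNReal.exists_pos_sum_of_countable' (ENNReal.coe_ne_zero.2 hε.ne') ι
  have hcover (i : ι) : ∃ w : P → ℝ≥0∞, (∀ x, f i x ≤ ∑' p, (Q p).indicator (fun _ => w p) x) ∧
      ∑' p, w p * c p < fractionalCoverCost Q c (f i) + δ i := by
    simpa only [fractionalCoverCost, iInf_lt_iff, exists_prop] using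
      ENNReal.lt_add_right (ENNReal.ne_top_of_tsum_ne_top hlt.ne i) (hδ i).ne'
  choose w hw hsum using hcover
  calc fractionalCoverCost Q c (fun x => ∑' i, f i x)
      ≤ ∑' p, (∑' i, w i p) * c p := by
        refine iInf₂_le (fun p => ∑' i, w i p) fun x => ?_
        calc ∑' i, f i x ≤ ∑' i, ∑' p, (Q p).indicator (fun _ => w i p) x :=
              ENNReal.tsum_le_tsum fun i => hw i x
          _ = ∑' p, (Q p).indicator (fun _ => ∑' i, w i p) x := by
              rw [ENNReal.tsum_comm]
              refine tsum_congr fun p => ?_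
              by_cases hx : x ∈ Q p <;> simp [hx]
    _ = ∑' i, ∑' p, w i p * c p := by
        simp only [← ENNReal.tsum_mul_right]
        rw [ENNReal.tsum_comm]
    _ ≤ ∑' i, (fractionalCoverCost Q c (f i) + δ i) := ENNReal.tsum_le_tsum fun i => (hsum i).le
    _ ≤ ∑' i, fractionalCoverCost Q c (f i) + ε := by
        rw [ENNReal.tsum_add]
        gcongr

lemma fractionalCoverCost_indicator_le {a : ℝ≥0∞} (ha₀ : a ≠ 0) (ha : a ≠ ∞) (E : Set X) :
    fractionalCoverCost Q c (E.indicator fun _ => a) ≤ a * coveringContent Q c E := by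
  classical
  rw [coveringContent, ENNReal.mul_iInf_of_ne ha₀ ha]
  refine le_iInf fun s => ?_
  rw [ENNReal.mul_iInf_of_ne ha₀ ha]
  refine le_iInf fun hE => iInf₂_le_of_le (fun p => ∑' i, if p = s i then a else 0) (fun x => ?_) ?_
  · refine indicator_apply_le' (fun hx => ?_) fun _ => zero_le
    obtain ⟨i, hi⟩ := mem_iUnion.1 (hE hx)
    calc a ≤ ∑' j, if s i = s j then a else 0 :=
          le_of_eq_of_le (if_pos rfl).symm (ENNReal.le_tsum i)
      _ = (Q (s i)).indicator (fun _ => ∑' j, if s i = s j then a else 0) x :=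
          (indicator_of_mem hi (fun _ => ∑' j, if s i = s j then a else 0)).symm
      _ ≤ _ := ENNReal.le_tsum (s i)
  · simp only [← ENNReal.tsum_mul_right, ← ENNReal.tsum_mul_left]
    rw [ENNReal.tsum_comm]
    simp [ite_mul]

lemma fractionalCoverCost_le_mul_choquet {ρ : ℝ} (hρ : 1 < ρ) (f : X → ℝ≥0∞) :
    fractionalCoverCost Q c f ≤ ENNReal.ofReal ρ * choquet (coveringContent Q c) f := by
  have hlength (k : ℤ) : 0 < ρ ^ (k + 1) - ρ ^ k :=
    sub_pos.2 (zpow_lt_zpow_right₀ hρ (lt_add_one k))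
  calc fractionalCoverCost Q c f
      ≤ fractionalCoverCost Q c fun x => ∑' k : ℤ, {y | ENNReal.ofReal (ρ ^ k) < f y}.indicator
          (fun _ => ENNReal.ofReal (ρ ^ (k + 1) - ρ ^ k)) x :=
        fractionalCoverCost_mono (le_tsum_zpow_superlevel hρ f)
    _ ≤ ∑' k : ℤ, fractionalCoverCost Q c ({y | ENNReal.ofReal (ρ ^ k) < f y}.indicator
          fun _ => ENNReal.ofReal (ρ ^ (k + 1) - ρ ^ k)) := fractionalCoverCost_tsum_le _
    _ ≤ ∑' k : ℤ, ENNReal.ofReal (ρ ^ (k + 1) - ρ ^ k) *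
          coveringContent Q c {y | ENNReal.ofReal (ρ ^ k) < f y} :=
        ENNReal.tsum_le_tsum fun k => fractionalCoverCost_indicator_le
          (ENNReal.ofReal_pos.2 (hlength k)).ne' ENNReal.ofReal_ne_top _
    _ ≤ ENNReal.ofReal ρ * choquet (coveringContent Q c) f :=
        tsum_zpow_le_mul_lintegral_Ioi hρ
          (coveringContent_mono.comp_antitone (antitone_superlevel f))

lemma fractionalCoverCost_le_choquet (f : X → ℝ≥0∞) :
    fractionalCoverCost Q c f ≤ choquet (coveringContent Q c) f := by
  have hlim : Filter.Tendsto (fun ρ => ENNReal.ofReal ρ * choquet (coveringContent Q c) f)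
      (nhdsWithin 1 (Ioi 1)) (nhds (choquet (coveringContent Q c) f)) := by
    have hofReal := ENNReal.tendsto_ofReal (Filter.tendsto_id.mono_left
      (nhdsWithin_le_nhds : nhdsWithin (1 : ℝ) (Ioi 1) ≤ nhds 1))
    simpa using ENNReal.Tendsto.mul_const hofReal (Or.inl (by simp))
  exact ge_of_tendsto hlim (eventually_mem_nhdsWithin.mono fun ρ hρ =>
    fractionalCoverCost_le_mul_choquet hρ f)

end Covering

lemma exists_measure_Iio_le_lt_measure_Iic {μ : Measure ℤ} (hμ : ∃ k, μ (Iio k) ≠ ∞) {τ : ℝ≥0∞}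
    (hτ : 0 < τ) (hτμ : τ < μ univ) : ∃ k, μ (Iio k) ≤ τ ∧ τ < μ (Iic k) := by
  have hbot : ∃ k, μ (Iio k) < τ := by
    have hlim := tendsto_measure_iInter_atBot
      (fun k : ℤ => measurableSet_Iio.nullMeasurableSet) monotone_Iio hμ
    have hempty : ⋂ k : ℤ, Iio k = ∅ :=
      eq_empty_of_forall_notMem fun k hk => lt_irrefl k (mem_iInter.1 hk k)
    rw [hempty, measure_empty] at hlim
    exact (hlim.eventually_lt_const hτ).exists
  have htop : ∃ k, τ < μ (Iio k) := by
    have hlim := tendsto_measure_iUnion_atTop (μ := μ) (monotone_Iio (α := ℤ))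
    rw [iUnion_Iio] at hlim
    exact (hlim.eventually_const_lt hτμ).exists
  obtain ⟨b, hb⟩ := htop
  obtain ⟨k, hk, hmax⟩ := Int.exists_greatest_of_bdd (P := fun k => μ (Iio k) ≤ τ)
    ⟨b, fun k hk => not_lt.1 fun hbk =>
      (hb.trans_le (measure_mono (Iio_subset_Iio hbk.le))).not_ge hk⟩
    (hbot.imp fun _ => le_of_lt)
  refine ⟨k, hk, lt_of_not_ge fun hle => (lt_add_one k).not_ge (hmax _ ?_)⟩
  rwa [Iio_add_one_eq_Iic]

section RefiningPartitions

variable {X ι : Type*} {π : ℤ → X → ι} {c : ℤ → ℝ≥0∞} {w : ℤ × ι → ℝ≥0∞}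

/-- The partitions of `X` into the fibres of `π k`, `k : ℤ`, become finer as `k` increases. -/
def IsRefining (π : ℤ → X → ι) : Prop :=
  ∀ ⦃j k⦄, j ≤ k → ∀ ⦃x y⦄, π k x = π k y → π j x = π j y

/-- The cell of generation `p.1` with label `p.2` of a sequence of partitions `π`. -/
def partitionCell (π : ℤ → X → ι) (p : ℤ × ι) : Set X := {x | π p.1 x = p.2}

/-- The weights `w` of the cells containing `x`, as a measure on the generations of these cells. -/
def chainMeasure (π : ℤ → X → ι) (w : ℤ × ι → ℝ≥0∞) (x : X) : Measure ℤ :=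
  Measure.sum fun k => w (k, π k x) • Measure.dirac k

lemma chainMeasure_apply (x : X) (s : Set ℤ) :
    chainMeasure π w x s = ∑' k, s.indicator (fun k => w (k, π k x)) k := by
  rw [chainMeasure, Measure.sum_apply _ (.of_discrete)]
  refine tsum_congr fun k => ?_
  by_cases hk : k ∈ s <;> simp [hk]

lemma chainMeasure_singleton (x : X) (k : ℤ) : chainMeasure π w x {k} = w (k, π k x) := by
  rw [chainMeasure_apply, tsum_eq_single k fun j hj => by simp [hj]]
  simp

lemma chainMeasure_univ (x : X) :
    chainMeasure π w x univ = ∑' p, (partitionCell π p).indicator (fun _ => w p) x := by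
  rw [chainMeasure_apply, ENNReal.tsum_prod']
  refine tsum_congr fun k => ?_
  rw [tsum_eq_single (π k x) fun m hm =>
      indicator_of_notMem (s := partitionCell π (k, m)) hm.symm _,
    indicator_of_mem (mem_univ k), indicator_of_mem (s := partitionCell π (k, π k x)) rfl]

lemma IsRefining.chainMeasure_Iio_congr (hπ : IsRefining π) {k : ℤ} {x y : X}
    (hxy : π k x = π k y) : chainMeasure π w x (Iio k) = chainMeasure π w y (Iio k) := by
  rw [chainMeasure_apply, chainMeasure_apply]
  refine tsum_congr fun j => ?_
  by_cases hj : j < k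
  · simp [hj, hπ hj.le hxy]
  · simp [hj]

lemma chainMeasure_Iio_mul_le (hc : Antitone c) (x : X) (k : ℤ) :
    chainMeasure π w x (Iio k) * c k ≤ ∑' p : ℤ × ι, w p * c p.1 := by
  rw [chainMeasure_apply, ← ENNReal.tsum_mul_right]
  calc ∑' j, (Iio k).indicator (fun j => w (j, π j x)) j * c k
      ≤ ∑' j, w (j, π j x) * c j := by
        refine ENNReal.tsum_le_tsum fun j => ?_
        by_cases hj : j < k
        · simpa [hj] using mul_le_mul_right (hc hj.le) _
        · simp [hj]
    _ ≤ ∑' p : ℤ × ι, w p * c p.1 :=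
        ENNReal.tsum_comp_le_tsum_of_injective (f := fun j => (j, π j x))
          (fun _ _ h => congrArg Prod.fst h) fun p => w p * c p.1

/-- The total weight of the cells of generation less than `p.1` containing the cell `p`. For a
refining sequence of partitions all points of `p` give the same value in the supremum. -/
def weightAbove (π : ℤ → X → ι) (w : ℤ × ι → ℝ≥0∞) (p : ℤ × ι) : ℝ≥0∞ :=
  ⨆ x ∈ partitionCell π p, chainMeasure π w x (Iio p.1)

lemma IsRefining.weightAbove_eq (hπ : IsRefining π) (k : ℤ) (x : X) :
    weightAbove π w (k, π k x) = chainMeasure π w x (Iio k) :=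
  le_antisymm (iSup₂_le fun _ hy => (hπ.chainMeasure_Iio_congr hy).le) (le_iSup₂_of_le x rfl le_rfl)

/-- The levels `t` at which the stopping-time argument selects the cell `p`: the weight of the
cells above `p` is at most `t`, but exceeds `t` once the weight of `p` is added. -/
def stoppingLevels (π : ℤ → X → ι) (w : ℤ × ι → ℝ≥0∞) (p : ℤ × ι) : Set ℝ :=
  Ioi 0 ∩ ENNReal.ofReal ⁻¹' Ico (weightAbove π w p) (weightAbove π w p + w p)

lemma volume_stoppingLevels_le (p : ℤ × ι) : volume (stoppingLevels π w p) ≤ w p := by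
  rw [stoppingLevels, volume_ofReal_preimage_Ico]
  exact tsub_le_iff_left.2 le_rfl

lemma IsRefining.exists_mem_stoppingLevels (hπ : IsRefining π) {x : X}
    (hx : ∃ k, chainMeasure π w x (Iio k) ≠ ∞) {t : ℝ} (ht : 0 < t)
    (htx : ENNReal.ofReal t < chainMeasure π w x univ) :
    ∃ k, t ∈ stoppingLevels π w (k, π k x) := by
  obtain ⟨k, hle, hlt⟩ :=
    exists_measure_Iio_le_lt_measure_Iic hx (ENNReal.ofReal_pos.2 ht) htx
  rw [← Iio_union_right, measure_union (by simp) (measurableSet_singleton k),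
    chainMeasure_singleton] at hlt
  exact ⟨k, ht, by rwa [hπ.weightAbove_eq], by rwa [hπ.weightAbove_eq]⟩

lemma exists_cell_cost_lt [Nonempty ι] (hc : Filter.Tendsto c Filter.atTop (nhds 0)) :
    ∀ ε > 0, ∃ p : ℤ × ι, c p.1 < ε := fun _ hε =>
  let ⟨k, hk⟩ := (hc.eventually_lt_const hε).exists
  ⟨(k, Classical.arbitrary ι), hk⟩

variable [Countable ι] [Nonempty ι]

lemma IsRefining.choquet_coveringContent_le_tsum (hπ : IsRefining π) (hc : Antitone c)
    (hc₀ : ∀ k, c k ≠ 0) (hlim : Filter.Tendsto c Filter.atTop (nhds 0)) (w : ℤ × ι → ℝ≥0∞) :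
    choquet (coveringContent (partitionCell π) fun p => c p.1)
        (fun x => ∑' p, (partitionCell π p).indicator (fun _ => w p) x) ≤
      ∑' p, w p * c p.1 := by
  rcases eq_or_ne (∑' p : ℤ × ι, w p * c p.1) ∞ with hinf | hfin
  · exact hinf ▸ le_top
  have hmass (x : X) : chainMeasure π w x (Iio 0) ≠ ∞ := fun h =>
    ((chainMeasure_Iio_mul_le hc x 0).trans_lt hfin.lt_top).ne (by rw [h, ENNReal.top_mul (hc₀ 0)])
  have hmeas (p : ℤ × ι) : MeasurableSet (stoppingLevels π w p) :=
    measurableSet_ofReal_preimage_Ico _ _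
  calc choquet (coveringContent (partitionCell π) fun p => c p.1)
        (fun x => ∑' p, (partitionCell π p).indicator (fun _ => w p) x)
      ≤ ∫⁻ t in Ioi (0 : ℝ), ∑' p, (stoppingLevels π w p).indicator (fun _ => c p.1) t := by
        refine setLIntegral_mono' measurableSet_Ioi fun t ht => ?_
        calc _ ≤ ∑' p : {p | t ∈ stoppingLevels π w p}, c p.1.1 := by
              refine coveringContent_le_tsum (exists_cell_cost_lt hlim) Subtype.val fun x hx => ?_
              obtain ⟨k, hk⟩ := hπ.exists_mem_stoppingLevels ⟨0, hmass x⟩ ht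
                (hx.trans_eq (chainMeasure_univ x).symm)
              exact mem_iUnion.2 ⟨⟨(k, π k x), hk⟩, rfl⟩
          _ = ∑' p, (stoppingLevels π w p).indicator (fun _ => c p.1) t :=
              tsum_subtype {p | t ∈ stoppingLevels π w p} fun p => c p.1
    _ ≤ ∫⁻ t, ∑' p, (stoppingLevels π w p).indicator (fun _ => c p.1) t :=
        setLIntegral_le_lintegral _ _
    _ = ∑' p, c p.1 * volume (stoppingLevels π w p) := by
        rw [lintegral_tsum fun p => (measurable_const.indicator (hmeas p)).aemeasurable]
        simp only [lintegral_indicator_const (hmeas _)]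
    _ ≤ ∑' p, w p * c p.1 := by
        refine ENNReal.tsum_le_tsum fun p => ?_
        rw [mul_comm]
        gcongr
        exact volume_stoppingLevels_le p

lemma IsRefining.choquet_coveringContent_eq_fractionalCoverCost (hπ : IsRefining π)
    (hc : Antitone c) (hc₀ : ∀ k, c k ≠ 0) (hlim : Filter.Tendsto c Filter.atTop (nhds 0))
    (f : X → ℝ≥0∞) :
    choquet (coveringContent (partitionCell π) fun p => c p.1) f =
      fractionalCoverCost (partitionCell π) (fun p => c p.1) f :=
  le_antisymm
    (le_iInf₂ fun w hw => (choquet_mono coveringContent_mono hw).trans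
      (hπ.choquet_coveringContent_le_tsum hc hc₀ hlim w))
    (fractionalCoverCost_le_choquet f)

lemma IsRefining.choquet_coveringContent_tsum_le (hπ : IsRefining π) (hc : Antitone c)
    (hc₀ : ∀ k, c k ≠ 0) (hlim : Filter.Tendsto c Filter.atTop (nhds 0)) {κ : Type*} [Countable κ]
    (f : κ → X → ℝ≥0∞) :
    choquet (coveringContent (partitionCell π) fun p => c p.1) (fun x => ∑' i, f i x) ≤
      ∑' i, choquet (coveringContent (partitionCell π) fun p => c p.1) (f i) := by
  simp only [hπ.choquet_coveringContent_eq_fractionalCoverCost hc hc₀ hlim]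
  exact fractionalCoverCost_tsum_le f

end RefiningPartitions

section DyadicLattice

variable {n : ℕ} {a : Rn n} {β l : ℝ}

/-- The side length of the cubes of generation `k` in the dyadic lattice of a cube of side `l`. -/
def dyadicSide (l : ℝ) (k : ℤ) : ℝ := (2 : ℝ) ^ (-k) * l

/-- The cost `ℓ(Q)^β` of the dyadic cubes `Q` of generation `k`. -/
def dyadicCost (β l : ℝ) (k : ℤ) : ℝ≥0∞ := ENNReal.ofReal (dyadicSide l k ^ β)

/-- The position of the dyadic cube of generation `k` containing `x`, in the lattice of the cube
with corner `a` and side `l`. -/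
def dyadicIndex (a : Rn n) (l : ℝ) (k : ℤ) (x : Rn n) : Fin n → ℤ :=
  fun i => ⌊(x i - a i) / dyadicSide l k⌋

lemma dyadicSide_pos (hl : 0 < l) (k : ℤ) : 0 < dyadicSide l k := mul_pos (by positivity) hl

lemma dyadicSide_antitone (hl : 0 < l) : Antitone (dyadicSide l) := fun j k hjk => by
  unfold dyadicSide
  gcongr
  norm_num

lemma tendsto_dyadicSide (l : ℝ) : Filter.Tendsto (dyadicSide l) Filter.atTop (nhds 0) := by
  have hlim := ((tendsto_rpow_atTop_of_base_lt_one (2⁻¹ : ℝ) (by norm_num) (by norm_num)).comp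
    tendsto_intCast_atTop_atTop).mul_const l
  rw [zero_mul] at hlim
  refine hlim.congr fun k => ?_
  rw [dyadicSide, Function.comp_apply, Real.rpow_intCast, inv_zpow']

lemma exists_dyadicSide_mem_Icc (hl : 0 < l) {r : ℝ} (hr : 0 < r) :
    ∃ k, dyadicSide l k ∈ Icc r (2 * r) := by
  obtain ⟨m, hle, hlt⟩ := exists_mem_Ico_zpow (div_pos hr hl) (one_lt_two (α := ℝ))
  rw [le_div_iff₀ hl] at hle
  rw [div_lt_iff₀ hl] at hlt
  refine ⟨-(m + 1), by simpa [dyadicSide] using hlt.le, ?_⟩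
  rw [dyadicSide, neg_neg, zpow_add_one₀ two_ne_zero]
  linarith

lemma dyadicCost_ne_zero (hl : 0 < l) (k : ℤ) : dyadicCost β l k ≠ 0 :=
  (ENNReal.ofReal_pos.2 (Real.rpow_pos_of_pos (dyadicSide_pos hl k) β)).ne'

lemma dyadicCost_antitone (hβ : 0 < β) (hl : 0 < l) : Antitone (dyadicCost β l) := fun _ k hjk =>
  ENNReal.ofReal_le_ofReal
    (Real.rpow_le_rpow (dyadicSide_pos hl k).le (dyadicSide_antitone hl hjk) hβ.le)

lemma tendsto_dyadicCost (hβ : 0 < β) (l : ℝ) :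
    Filter.Tendsto (dyadicCost β l) Filter.atTop (nhds 0) := by
  have hlim := ENNReal.tendsto_ofReal ((tendsto_dyadicSide l).rpow_const (Or.inr hβ.le))
  rwa [Real.zero_rpow hβ.ne', ENNReal.ofReal_zero] at hlim

lemma partitionCell_dyadicIndex (hl : 0 < l) (p : ℤ × (Fin n → ℤ)) :
    partitionCell (dyadicIndex a l) p = dyadicCube n a l p.1 p.2 := by
  have hs : 0 < (2 : ℝ) ^ (-p.1) * l := dyadicSide_pos hl p.1
  ext x
  simp only [partitionCell, dyadicIndex, dyadicCube, mem_ofPred_eq, funext_iff, Int.floor_eq_iff,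
    le_div_iff₀ hs, div_lt_iff₀ hs, le_sub_iff_add_le', sub_lt_iff_lt_add', dyadicSide]

lemma isRefining_dyadicIndex (a : Rn n) (l : ℝ) : IsRefining (dyadicIndex a l) := by
  intro j k hjk x y hxy
  obtain ⟨d, rfl⟩ := Int.le.dest hjk
  have hside : dyadicSide l j = dyadicSide l (j + d) * (2 ^ d : ℕ) := by
    have hzpow : (2 : ℝ) ^ (-j) = 2 ^ (-(j + d : ℤ)) * 2 ^ d := by
      rw [← zpow_natCast, ← zpow_add₀ two_ne_zero, neg_add, neg_add_cancel_right]
    rw [dyadicSide, dyadicSide, hzpow]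
    push_cast
    ring
  have hparent (z : Rn n) (i : Fin n) :
      dyadicIndex a l j z i = dyadicIndex a l (j + d) z i / ((2 ^ d : ℕ) : ℤ) := by
    rw [dyadicIndex, dyadicIndex, ← Int.floor_div_natCast, hside, div_div]
  ext i
  rw [hparent, hparent, hxy]

lemma dContent_eq_coveringContent (β : ℝ) (a : Rn n) (hl : 0 < l) :
    dContent n β a l =
      coveringContent (partitionCell (dyadicIndex a l)) (fun p => dyadicCost β l p.1) := by
  ext E
  simp only [dContent, coveringContent, partitionCell_dyadicIndex hl, dyadicCost, dyadicSide]

lemma hContent_eq_coveringContent (n : ℕ) (β : ℝ) :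
    hContent n β = coveringContent (fun p : Rn n × ℝ => ball p.1 p.2)
      (fun p => omegaC β * ENNReal.ofReal (p.2 ^ β)) := rfl

lemma choquet_dContent_tsum_le (hβ : 0 < β) (a : Rn n) (hl : 0 < l) {ι : Type*} [Countable ι]
    (f : ι → Rn n → ℝ≥0∞) :
    choquet (dContent n β a l) (fun x => ∑' i, f i x) ≤ ∑' i, choquet (dContent n β a l) (f i) := by
  rw [dContent_eq_coveringContent β a hl]
  exact (isRefining_dyadicIndex a l).choquet_coveringContent_tsum_le (dyadicCost_antitone hβ hl)
    (dyadicCost_ne_zero hl) (tendsto_dyadicCost hβ l) f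

end DyadicLattice

section Comparison

variable {n : ℕ} {a : Rn n} {β l r : ℝ}

lemma omegaC_ne_zero (hβ : 0 < β) : omegaC β ≠ 0 :=
  (ENNReal.ofReal_pos.2 (div_pos (Real.rpow_pos_of_pos Real.pi_pos _)
    (Real.Gamma_pos_of_pos (by linarith)))).ne'

lemma dyadicIndex_le_add_one (hl : 0 < l) {k : ℤ} {x y : Rn n}
    (h : dist x y ≤ dyadicSide l k) : dyadicIndex a l k x ≤ dyadicIndex a l k y + 1 := by
  intro i
  have hs := dyadicSide_pos hl k
  have hcoord : x i - y i ≤ dyadicSide l k :=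
    (le_abs_self _).trans ((PiLp.norm_apply_le (x - y) i).trans (dist_eq_norm x y ▸ h))
  rw [Pi.add_apply, Pi.one_apply, dyadicIndex, dyadicIndex, ← Int.floor_add_one,
    div_add_one hs.ne']
  gcongr
  linarith

lemma dContent_ball_le (hβ : 0 < β) (hl : 0 < l) (hr : 0 < r) (x : Rn n) :
    dContent n β a l (ball x r) ≤ 3 ^ n * ENNReal.ofReal ((2 * r) ^ β) := by
  obtain ⟨k, hrk, hkr⟩ := exists_dyadicSide_mem_Icc hl hr
  let m := dyadicIndex a l k x
  have hcover : ball x r ⊆ ⋃ j : Finset.Icc (m - 1) (m + 1),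
      partitionCell (dyadicIndex a l) (k, j.1) := fun y hy => by
    have hyx : dist y x ≤ dyadicSide l k := (mem_ball.1 hy).le.trans hrk
    refine mem_iUnion.2 ⟨⟨dyadicIndex a l k y, Finset.mem_Icc.2 ⟨?_, ?_⟩⟩, rfl⟩
    · exact sub_le_iff_le_add.2 (dyadicIndex_le_add_one hl (dist_comm y x ▸ hyx))
    · exact dyadicIndex_le_add_one hl hyx
  have hcard : (Finset.Icc (m - 1) (m + 1)).card = 3 ^ n := by
    have hthree (i : Fin n) : m i + 1 + 1 - (m i - 1) = 3 := by ring
    simp [Pi.card_Icc, hthree]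
  rw [dContent_eq_coveringContent β a hl]
  calc _ ≤ ∑' _ : Finset.Icc (m - 1) (m + 1), dyadicCost β l k :=
        coveringContent_le_tsum (exists_cell_cost_lt (tendsto_dyadicCost hβ l)) _ hcover
    _ = 3 ^ n * dyadicCost β l k := by simp [hcard]
    _ ≤ 3 ^ n * ENNReal.ofReal ((2 * r) ^ β) := by
        gcongr
        exact ENNReal.ofReal_le_ofReal (Real.rpow_le_rpow (dyadicSide_pos hl k).le hkr hβ.le)

lemma dyadicCube_subset_ball (hl : 0 < l) (k : ℤ) (m : Fin n → ℤ) :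
    dyadicCube n a l k m ⊆
      ball (WithLp.toLp 2 fun i => a i + m i * dyadicSide l k) ((n + 1) * dyadicSide l k) := by
  intro x hx
  have hs := dyadicSide_pos hl k
  rw [mem_ball, EuclideanSpace.dist_eq, Real.sqrt_lt' (by positivity)]
  calc ∑ i, dist (x i) (a i + m i * dyadicSide l k) ^ 2
      ≤ ∑ _i : Fin n, dyadicSide l k ^ 2 := by
        gcongr with i
        have hxi : a i + m i * dyadicSide l k ≤ x i ∧ x i < a i + (m i + 1) * dyadicSide l k := hx i
        rw [Real.dist_eq, abs_le]
        constructor <;> linarith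
    _ = n * dyadicSide l k ^ 2 := by simp
    _ < (n + 1) ^ 2 * dyadicSide l k ^ 2 := by
        gcongr
        nlinarith [(Nat.cast_nonneg n : (0 : ℝ) ≤ n)]
    _ = ((n + 1) * dyadicSide l k) ^ 2 := (mul_pow _ _ 2).symm

lemma hContent_dyadicCube_le (hβ : 0 < β) (hl : 0 < l) (k : ℤ) (m : Fin n → ℤ) :
    hContent n β (dyadicCube n a l k m) ≤
      omegaC β * ENNReal.ofReal (((n + 1) * dyadicSide l k) ^ β) := by
  rw [hContent_eq_coveringContent]
  refine coveringContent_le_of_subset (fun ε hε => ⟨(0, 0), ?_⟩) (p := (_, _))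
    (dyadicCube_subset_ball hl k m)
  simpa [Real.zero_rpow hβ.ne'] using hε

lemma dContent_le_mul_hContent (hβ : 0 < β) (a : Rn n) (hl : 0 < l) (E : Set (Rn n)) :
    dContent n β a l E ≤ 3 ^ n * ENNReal.ofReal (2 ^ β) / omegaC β * hContent n β E := by
  have hω := omegaC_ne_zero hβ
  have h2β : ENNReal.ofReal (2 ^ β) ≠ 0 := (ENNReal.ofReal_pos.2 (by positivity)).ne'
  rw [hContent_eq_coveringContent, dContent_eq_coveringContent β a hl]
  refine coveringContent_le_mul_coveringContent ?_ ?_ (fun ⟨x, r⟩ => ?_) E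
  · exact ENNReal.div_ne_zero.2 ⟨mul_ne_zero (by simp) h2β, ENNReal.ofReal_ne_top⟩
  · exact ENNReal.div_ne_top (ENNReal.mul_ne_top (by simp) ENNReal.ofReal_ne_top) hω
  rcases le_or_gt r 0 with hr | hr
  · have hcost := exists_cell_cost_lt (ι := Fin n → ℤ) (tendsto_dyadicCost hβ l)
    simp [ball_eq_empty.2 hr, coveringContent_empty hcost]
  rw [← dContent_eq_coveringContent β a hl]
  calc dContent n β a l (ball x r)
      ≤ 3 ^ n * ENNReal.ofReal ((2 * r) ^ β) := dContent_ball_le hβ hl hr x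
    _ = 3 ^ n * ENNReal.ofReal (2 ^ β) * ENNReal.ofReal (r ^ β) := by
        rw [Real.mul_rpow two_pos.le hr.le, ENNReal.ofReal_mul (by positivity), mul_assoc]
    _ = _ := by rw [← mul_assoc, ENNReal.div_mul_cancel hω ENNReal.ofReal_ne_top]

lemma hContent_le_mul_dContent (hβ : 0 < β) (a : Rn n) (hl : 0 < l) (E : Set (Rn n)) :
    hContent n β E ≤ omegaC β * ENNReal.ofReal ((n + 1) ^ β) * dContent n β a l E := by
  have hnβ : ENNReal.ofReal ((n + 1) ^ β) ≠ 0 := (ENNReal.ofReal_pos.2 (by positivity)).ne'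
  rw [hContent_eq_coveringContent, dContent_eq_coveringContent β a hl]
  refine coveringContent_le_mul_coveringContent (mul_ne_zero (omegaC_ne_zero hβ) hnβ)
    (ENNReal.mul_ne_top ENNReal.ofReal_ne_top ENNReal.ofReal_ne_top) (fun p => ?_) E
  rw [← hContent_eq_coveringContent, partitionCell_dyadicIndex hl]
  refine (hContent_dyadicCube_le hβ hl p.1 p.2).trans_eq ?_
  rw [Real.mul_rpow (by positivity) (dyadicSide_pos hl p.1).le, ENNReal.ofReal_mul (by positivity),
    mul_assoc, dyadicCost]

lemma exists_content_comparison (n : ℕ) (hβ : 0 < β) :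
    ∃ K : ℝ, 1 < K ∧ ∀ (a : Rn n) {l : ℝ}, 0 < l → ∀ E,
      dContent n β a l E ≤ ENNReal.ofReal K * hContent n β E ∧
        hContent n β E ≤ ENNReal.ofReal K * dContent n β a l E := by
  let K₁ : ℝ≥0∞ := 3 ^ n * ENNReal.ofReal (2 ^ β) / omegaC β
  let K₂ : ℝ≥0∞ := omegaC β * ENNReal.ofReal ((n + 1) ^ β)
  have hK₁top : K₁ ≠ ∞ :=
    ENNReal.div_ne_top (ENNReal.mul_ne_top (by simp) ENNReal.ofReal_ne_top) (omegaC_ne_zero hβ)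
  have hK₂top : K₂ ≠ ∞ := ENNReal.mul_ne_top ENNReal.ofReal_ne_top ENNReal.ofReal_ne_top
  have hK₁_nonneg := K₁.toReal_nonneg
  have hK₂_nonneg := K₂.toReal_nonneg
  refine ⟨2 + K₁.toReal + K₂.toReal, by linarith, fun a l hl E => ⟨?_, ?_⟩⟩
  · refine (dContent_le_mul_hContent hβ a hl E).trans ?_
    gcongr
    exact ENNReal.le_ofReal_iff_toReal_le hK₁top (by linarith) |>.2 (by linarith)
  · refine (hContent_le_mul_dContent hβ a hl E).trans ?_
    gcongr
    exact ENNReal.le_ofReal_iff_toReal_le hK₂top (by linarith) |>.2 (by linarith)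

end Comparison

theorem statement19_general (n : ℕ) {β : ℝ} (hβ : 0 < β) :
    ∃ Cβ : ℝ, 1 < Cβ ∧
      (∀ (a : Rn n) (l : ℝ), 0 < l → ∀ E : Set (Rn n),
        (ENNReal.ofReal Cβ)⁻¹ * dContent n β a l E ≤ hContent n β E ∧
          hContent n β E ≤ ENNReal.ofReal Cβ * dContent n β a l E) ∧
      (∀ f : ℕ → Rn n → ℝ≥0∞,
        choquet (hContent n β) (fun x => ∑' j, f j x) ≤
          ENNReal.ofReal Cβ ^ 2 * ∑' j, choquet (hContent n β) (f j)) := by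
  obtain ⟨K, hK, hcomp⟩ := exists_content_comparison n hβ
  have hK₀ : ENNReal.ofReal K ≠ 0 := (ENNReal.ofReal_pos.2 (one_pos.trans hK)).ne'
  refine ⟨K, hK, fun a l hl E => ?_, fun f => ?_⟩
  · exact (hcomp a hl E).imp_left (ENNReal.inv_mul_le_iff hK₀ ENNReal.ofReal_ne_top).2
  · exact choquet_tsum_le_of_comparable ENNReal.ofReal_ne_top
      (fun E => (hcomp 0 one_pos E).2) (fun E => (hcomp 0 one_pos E).1)
      (choquet_dContent_tsum_le hβ 0 one_pos f)

/-- The dyadic Hausdorff content associated with the lattice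
generated by a cube `Q₀` (corner `a`, side `l > 0`) is comparable with the
Hausdorff content, and consequently the Choquet integral with respect to
`H^β_∞` is countably quasi-subadditive with constant `C_β²`. -/
theorem statement19 (n : ℕ) (β : ℝ) (hβ0 : 0 < β) (hβn : β ≤ n)
    (a : Rn n) (l : ℝ) (hl : 0 < l) :
    ∃ Cβ : ℝ, 1 < Cβ ∧
      (∀ E : Set (Rn n),
        (ENNReal.ofReal Cβ)⁻¹ * dContent n β a l E ≤ hContent n β E ∧
          hContent n β E ≤ ENNReal.ofReal Cβ * dContent n β a l E) ∧
      (∀ f : ℕ → Rn n → ℝ≥0∞,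
        choquet (hContent n β) (fun x => ∑' j, f j x) ≤
          ENNReal.ofReal Cβ ^ 2 * ∑' j, choquet (hContent n β) (f j)) := by
  obtain ⟨Cβ, hCβ, hcomp, hsub⟩ := statement19_general n hβ0
  exact ⟨Cβ, hCβ, hcomp a l hl, hsub⟩

end
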